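/- arXiv:2410.22507 — 2 statements merged into one kernel-verified Lean document; each statement's English description precedes it below -/
import Mathlib

section
/- Let K be a totally real number field satisfying: (a) every α ∈ O_K⁺ with α ⪯ 2 lies in ℤ, and (b) if 2 = αω² with α, ω ∈ O_K then εω ∈ ℤ for some unit ε. Then the zero lattice has truant 1 and, assuming 2 is squarefree in O_K, 1 belongs to every universality criterion set and 2 belongs to the minimal criterion set if and only if 2 is squarefree in O_K. -/
open NumberField

def TotReal (K : Type) [Field K] [NumberField K] : Prop :=
  ∀ v : InfinitePlace K, v.IsReal

def TPos {K : Type} [Field K] [NumberField K] (a : 𝓞 K) : Prop :=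
  ∀ φ : K →+* ℝ, 0 < φ (a : K)

noncomputable def Nm {K : Type} [Field K] [NumberField K] (a : 𝓞 K) : ℤ :=
  Algebra.norm ℤ a

structure QLat (K : Type) [Field K] [NumberField K] where
  carrier : Type
  [isAddCommGroup : AddCommGroup carrier]
  [isModule : Module (𝓞 K) carrier]
  [isFinite : Module.Finite (𝓞 K) carrier]
  [isTorsionFree : NoZeroSMulDivisors (𝓞 K) carrier]
  Q : QuadraticForm (𝓞 K) carrier

attribute [instance] QLat.isAddCommGroup QLat.isModule QLat.isFinite QLat.isTorsionFree

def QLat.PosDef {K : Type} [Field K] [NumberField K] (L : QLat K) : Prop :=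
  ∀ v : L.carrier, v ≠ 0 → TPos (L.Q v)

def QLat.Rep {K : Type} [Field K] [NumberField K] (L : QLat K) (a : 𝓞 K) : Prop :=
  ∃ v : L.carrier, L.Q v = a

/-- Total order relation $a ⪯ b$: $a ≺ b$ (in all real embeddings) or $a = b$. -/
def TLE {K : Type} [Field K] [NumberField K] (a b : 𝓞 K) : Prop :=
  (∀ φ : K →+* ℝ, φ (a : K) < φ (b : K)) ∨ a = b

/-- $α$ is critical: some totally positive definite lattice represents every class of
$\mathcal O_K^+/\mathcal U_K^2$ except that of $α$. -/
def Crit {K : Type} [Field K] [NumberField K] (α : 𝓞 K) : Prop :=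
  TPos α ∧ ∃ L : QLat K, L.PosDef ∧
    (∀ γ : 𝓞 K, TPos γ → (¬ ∃ ε : (𝓞 K)ˣ, γ = α * (ε : 𝓞 K) ^ 2) → L.Rep γ) ∧
    ¬ L.Rep α

/-- A universality criterion set: a set of totally positive integers such that a totally
positive definite lattice is universal iff it represents all its elements. -/
def IsCritSet {K : Type} [Field K] [NumberField K] (C : Set (𝓞 K)) : Prop :=
  (∀ c ∈ C, TPos c) ∧
  ∀ L : QLat K, L.PosDef → ((∀ c ∈ C, L.Rep c) ↔ ∀ γ : 𝓞 K, TPos γ → L.Rep γ)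

/-!
Both parts rest on one principle: if a totally positive definite lattice `L` represents all totally
positive integers of norm less than `Nm α` but not `α` itself, then `α` is critical. Indeed, by
Dirichlet's unit theorem a totally positive integer may be multiplied by the square of a unit so
that its real embeddings have bounded ratios, and then it is either bounded or a sum of bounded
integers `≻ α`. So finitely many `s`, all of norm at least `Nm α` and none in the class of `α`,
generate the remaining classes additively. By Lagrange's four-square theorem `L ⊥ ⟨s, s, s, s, …⟩`
represents everything outside the class of `α`, and it still misses `α`: a term `s x² ⪯ α` with
`Nm s ≥ Nm α` must equal `α`, with `x` a unit.

The zero lattice serves for `α = 1`. For squarefree `α = 2` the diagonal lattice on one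
representative of each class of norm less than `Nm 2` serves, because `1` and `2` are the only
totally positive integers `⪯ 2`: if `β ≺ 2`, all conjugates of `β - 1` have absolute value
less than `1`.
-/

section SqAssociated

variable {M : Type*} [CommMonoid M]

/-- `a` and `b` lie in the same class modulo squares of units; in `𝓞 K` these are the
classes by which critical elements are defined. -/
def SqAssociated (a b : M) : Prop :=
  ∃ ε : Mˣ, a = b * (ε : M) ^ 2

lemma SqAssociated.symm {a b : M} (h : SqAssociated a b) : SqAssociated b a := by
  obtain ⟨ε, rfl⟩ := h
  exact ⟨ε⁻¹, by rw [mul_assoc, ← mul_pow, Units.mul_inv, one_pow, mul_one]⟩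

lemma SqAssociated.trans {a b c : M} (h : SqAssociated a b) (h' : SqAssociated b c) :
    SqAssociated a c := by
  obtain ⟨ε, rfl⟩ := h
  obtain ⟨δ, rfl⟩ := h'
  exact ⟨δ * ε, by rw [mul_assoc, ← mul_pow, Units.val_mul]⟩

lemma sqAssociated_mul_unit_sq (a : M) (u : Mˣ) : SqAssociated (a * (u : M) ^ 2) a :=
  ⟨u, rfl⟩

end SqAssociated

section NumberField

variable {K : Type} [Field K] [NumberField K]

section Embeddings

lemma bijective_ofRealHom_comp (hK : TotReal K) :
    Function.Bijective fun φ : K →+* ℝ => Complex.ofRealHom.comp φ := by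
  refine ⟨fun φ ψ h => RingHom.ext fun x => ?_, fun σ => ?_⟩
  · exact Complex.ofReal_injective (RingHom.congr_fun h x)
  · have hσ := InfinitePlace.isReal_of_mk_isReal (hK (InfinitePlace.mk σ))
    exact ⟨hσ.embedding, RingHom.ext hσ.coe_embedding_apply⟩

lemma nonempty_realEmbedding (hK : TotReal K) : Nonempty (K →+* ℝ) :=
  (Equiv.ofBijective _ (bijective_ofRealHom_comp hK)).nonempty

lemma coe_nm (hK : TotReal K) (a : 𝓞 K) : (Nm a : ℝ) = ∏ φ : K →+* ℝ, φ (a : K) := by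
  have hQ := Algebra.norm_eq_prod_embeddings ℚ ℂ (a : K)
  rw [← Algebra.coe_norm_int, ← (RingHom.equivRatAlgHom (R := K) (S := ℂ)).prod_comp,
    ← (bijective_ofRealHom_comp hK).prod_comp] at hQ
  have hℂ : ((Nm a : ℝ) : ℂ) = ((∏ φ : K →+* ℝ, φ (a : K) : ℝ) : ℂ) := by simpa [Nm] using hQ
  exact_mod_cast hℂ

lemma coe_trace (hK : TotReal K) (a : 𝓞 K) :
    (Algebra.trace ℤ (𝓞 K) a : ℝ) = ∑ φ : K →+* ℝ, φ (a : K) := by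
  have hQ := trace_eq_sum_embeddings (K := ℚ) ℂ (x := (a : K))
  rw [← Algebra.coe_trace_int, ← (RingHom.equivRatAlgHom (R := K) (S := ℂ)).sum_comp,
    ← (bijective_ofRealHom_comp hK).sum_comp] at hQ
  have hℂ : ((Algebra.trace ℤ (𝓞 K) a : ℝ) : ℂ) = ((∑ φ : K →+* ℝ, φ (a : K) : ℝ) : ℂ) := by
    simpa using hQ
  exact_mod_cast hℂ

lemma finite_setOf_embedding_le (hK : TotReal K) (B : ℝ) :
    {x : 𝓞 K | TPos x ∧ ∀ φ : K →+* ℝ, φ (x : K) ≤ B}.Finite := by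
  refine ((Embeddings.finite_of_norm_le K ℂ B).preimage
    RingOfIntegers.coe_injective.injOn).subset ?_
  rintro x ⟨hx, hB⟩
  refine ⟨RingOfIntegers.isIntegral_coe x, fun σ => ?_⟩
  obtain ⟨φ, rfl⟩ := (bijective_ofRealHom_comp hK).surjective σ
  simpa [abs_of_pos (hx φ)] using hB φ

end Embeddings

section TotallyPositive

lemma tPos_one : TPos (1 : 𝓞 K) := fun φ => by simp

lemma TPos.mul_sq {a x : 𝓞 K} (ha : TPos a) (hx : x ≠ 0) : TPos (a * x ^ 2) := fun φ => by
  have hφx : φ (x : K) ≠ 0 := by simpa using hx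
  have hφa := ha φ
  simp only [map_mul, map_pow]
  positivity

lemma TPos.of_mul_sq {a x : 𝓞 K} (h : TPos (a * x ^ 2)) : TPos a := fun φ => by
  have hφ := h φ
  simp only [map_mul, map_pow] at hφ
  exact pos_of_mul_pos_left hφ (sq_nonneg _)

lemma TPos.embedding_mul_sq_nonneg {a : 𝓞 K} (ha : TPos a) (x : 𝓞 K) (φ : K →+* ℝ) :
    0 ≤ φ ((a * x ^ 2 : 𝓞 K) : K) := by
  simp only [map_mul, map_pow]
  exact mul_nonneg (ha φ).le (sq_nonneg _)

lemma tle_iff {a b : 𝓞 K} : TLE a b ↔ ∀ φ : K →+* ℝ, φ (a : K) ≤ φ (b : K) := by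
  refine ⟨?_, fun h => or_iff_not_imp_right.mpr fun hne φ => (h φ).lt_of_ne fun heq => ?_⟩
  · rintro (h | rfl) φ
    exacts [(h φ).le, le_rfl]
  · exact hne (RingOfIntegers.coe_injective (φ.injective heq))

lemma nm_one : Nm (1 : 𝓞 K) = 1 := map_one _

lemma nm_mul (a b : 𝓞 K) : Nm (a * b) = Nm a * Nm b := map_mul _ _ _

lemma nm_mul_unit_sq (a : 𝓞 K) (u : (𝓞 K)ˣ) : Nm (a * (u : 𝓞 K) ^ 2) = Nm a := by
  have hu : Nm (u : 𝓞 K) ^ 2 = 1 := Int.isUnit_sq (u.isUnit.map (Algebra.norm ℤ))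
  rw [pow_two, nm_mul, nm_mul, ← pow_two, hu, mul_one]

lemma isUnit_of_nm_sq_eq_one {x : 𝓞 K} (h : Nm x ^ 2 = 1) : IsUnit x := by
  rw [NumberField.isUnit_iff_norm, RingOfIntegers.coe_norm, ← Algebra.coe_norm_int]
  exact_mod_cast Int.isUnit_iff_abs_eq.mp (IsUnit.of_pow_eq_one h two_ne_zero)

lemma SqAssociated.nm_eq {a b : 𝓞 K} (h : SqAssociated a b) : Nm a = Nm b := by
  obtain ⟨ε, rfl⟩ := h
  exact nm_mul_unit_sq b ε

lemma TPos.nm_pos (hK : TotReal K) {a : 𝓞 K} (ha : TPos a) : 0 < Nm a := by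
  rw [← Int.cast_pos (R := ℝ), coe_nm hK]
  exact Finset.prod_pos fun φ _ => ha φ

lemma TPos.nm_lt_nm (hK : TotReal K) {a b : 𝓞 K} (ha : TPos a)
    (h : ∀ φ : K →+* ℝ, φ (a : K) < φ (b : K)) : Nm a < Nm b := by
  have := nonempty_realEmbedding hK
  rw [← Int.cast_lt (R := ℝ), coe_nm hK, coe_nm hK]
  exact Finset.prod_lt_prod_of_nonempty (fun φ _ => ha φ) (fun φ _ => h φ) Finset.univ_nonempty

lemma TLE.eq_of_nm_le (hK : TotReal K) {a b : 𝓞 K} (ha : TPos a) (h : TLE a b)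
    (hn : Nm b ≤ Nm a) : a = b :=
  h.resolve_left fun hlt => (ha.nm_lt_nm hK hlt).not_ge hn

lemma eq_zero_of_abs_embedding_lt_one (hK : TotReal K) {a : 𝓞 K}
    (h : ∀ φ : K →+* ℝ, |φ (a : K)| < 1) : a = 0 := by
  by_contra ha
  have hpos : TPos (1 * a ^ 2) := tPos_one.mul_sq ha
  have hlt : Nm (1 * a ^ 2) < Nm (1 : 𝓞 K) :=
    hpos.nm_lt_nm hK fun φ => by simpa using h φ
  have := hpos.nm_pos hK
  rw [nm_one] at hlt
  lia

lemma eq_one_or_eq_two_of_tle (hK : TotReal K) {β : 𝓞 K} (hβ : TPos β) (h : TLE β 2) :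
    β = 1 ∨ β = 2 := by
  refine h.imp_left fun hlt => sub_eq_zero.mp (eq_zero_of_abs_embedding_lt_one hK fun φ => ?_)
  have hφ := hlt φ
  simp only [map_ofNat, map_sub, map_one] at hφ ⊢
  rw [abs_lt]
  constructor <;> linarith [hβ φ]

lemma sqAssociated_of_mul_sq_tle (hK : TotReal K) {s x α : 𝓞 K} (hs : TPos s) (hx : x ≠ 0)
    (h : TLE (s * x ^ 2) α) (hn : Nm α ≤ Nm s) : SqAssociated s α := by
  have hs0 : 0 < Nm s := hs.nm_pos hK
  have hmul : Nm (s * x ^ 2) = Nm s * Nm x ^ 2 := by rw [pow_two, nm_mul, nm_mul, ← pow_two]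
  have hx1 : 1 ≤ Nm x ^ 2 := by
    have := (hs.mul_sq hx).nm_pos hK
    rw [hmul] at this
    exact pos_of_mul_pos_right this hs0.le
  have heq : s * x ^ 2 = α := h.eq_of_nm_le hK (hs.mul_sq hx) (by rw [hmul]; nlinarith)
  have hunit : IsUnit x := by
    rw [heq] at hmul
    have hone : Nm x ^ 2 = 1 := by nlinarith
    exact isUnit_of_nm_sq_eq_one hone
  obtain ⟨u, rfl⟩ := hunit
  exact .symm ⟨u, heq.symm⟩

lemma TPos.exists_embedding_le_nm (hK : TotReal K) {a : 𝓞 K} (ha : TPos a) :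
    ∃ φ : K →+* ℝ, φ (a : K) ≤ Nm a := by
  classical
  by_contra! h
  obtain ⟨φ₀⟩ := nonempty_realEmbedding hK
  have hone : (1 : ℝ) ≤ Nm a := by exact_mod_cast ha.nm_pos hK
  have : φ₀ (a : K) ≤ Nm a := by
    rw [coe_nm hK, ← Finset.mul_prod_erase _ _ (Finset.mem_univ φ₀)]
    exact le_mul_of_one_le_right (ha φ₀).le
      (Finset.one_le_prod fun φ _ => hone.trans (h φ).le)
  exact (h φ₀).not_ge this

end TotallyPositive

section Units

lemma exists_unit_abs_embedding_lt_one (φ : K →+* ℝ) :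
    ∃ u : (𝓞 K)ˣ, ∀ ψ : K →+* ℝ, ψ ≠ φ → |ψ ((u : 𝓞 K) : K)| < 1 := by
  obtain ⟨u, hu⟩ := Units.dirichletUnitTheorem.exists_unit K
    (InfinitePlace.mk (Complex.ofRealHom.comp φ))
  refine ⟨u, fun ψ hψ => ?_⟩
  have hne : InfinitePlace.mk (Complex.ofRealHom.comp ψ) ≠
      InfinitePlace.mk (Complex.ofRealHom.comp φ) := by
    rw [Ne, InfinitePlace.mk_eq_iff, not_or]
    constructor <;> intro h <;>
      exact hψ (RingHom.ext fun x => by simpa using RingHom.congr_fun h x)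
  have hlt := (Real.log_neg_iff (Units.pos_at_place u _)).mp (hu _ hne)
  simpa [InfinitePlace.apply] using hlt

lemma TPos.exists_unit_trace_le (hK : TotReal K) {γ : 𝓞 K} (hγ : TPos γ) :
    ∃ u : (𝓞 K)ˣ, ∀ v : (𝓞 K)ˣ,
      ∑ φ : K →+* ℝ, φ ((γ * (u : 𝓞 K) ^ 2 : 𝓞 K) : K) ≤
        ∑ φ : K →+* ℝ, φ ((γ * (v : 𝓞 K) ^ 2 : 𝓞 K) : K) := by
  have htr (v : (𝓞 K)ˣ) : 0 ≤ Algebra.trace ℤ (𝓞 K) (γ * (v : 𝓞 K) ^ 2) := by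
    rw [← Int.cast_nonneg_iff (R := ℝ), coe_trace hK]
    exact Finset.sum_nonneg fun φ _ => (hγ.mul_sq v.ne_zero φ).le
  let t (v : (𝓞 K)ˣ) : ℕ := (Algebra.trace ℤ (𝓞 K) (γ * (v : 𝓞 K) ^ 2)).toNat
  refine ⟨Function.argmin t, fun v => ?_⟩
  rw [← coe_trace hK, ← coe_trace hK, Int.cast_le]
  have hmin : t (Function.argmin t) ≤ t v := Function.argmin_le t v
  have := htr v
  lia

/-- At the translate `γ u²` of least trace, multiplying by the square of a unit `η` that
is less than `1` in absolute value at every place but `ψ` cannot decrease the trace, so the gain at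
`ψ` outweighs the loss at each other place `φ`. -/
lemma exists_unit_embedding_le_mul (hK : TotReal K) :
    ∃ c : ℝ, 1 ≤ c ∧ ∀ γ : 𝓞 K, TPos γ → ∃ u : (𝓞 K)ˣ, ∀ φ ψ : K →+* ℝ,
      φ ((γ * (u : 𝓞 K) ^ 2 : 𝓞 K) : K) ≤ c * ψ ((γ * (u : 𝓞 K) ^ 2 : 𝓞 K) : K) := by
  classical
  choose η hη using exists_unit_abs_embedding_lt_one (K := K)
  let r (φ ψ : K →+* ℝ) : ℝ := φ ((η ψ : 𝓞 K) : K) ^ 2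
  obtain ⟨c, hc⟩ := (Set.finite_range fun p : (K →+* ℝ) × (K →+* ℝ) =>
    (r p.2 p.2 - 1) / (1 - r p.1 p.2)).bddAbove
  refine ⟨max c 1, le_max_right _ _, fun γ hγ => ?_⟩
  obtain ⟨u, hu⟩ := hγ.exists_unit_trace_le hK
  refine ⟨u, fun φ ψ => ?_⟩
  set x := γ * (u : 𝓞 K) ^ 2 with hx
  have hpos : TPos x := hγ.mul_sq u.ne_zero
  rcases eq_or_ne φ ψ with rfl | hne
  · exact le_mul_of_one_le_left (hpos φ).le (le_max_right _ _)
  have hr (χ : K →+* ℝ) (h : χ ≠ ψ) : r χ ψ < 1 := (sq_lt_one_iff_abs_lt_one _).mpr (hη ψ χ h)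
  have htrace : 0 ≤ ∑ χ : K →+* ℝ, χ (x : K) * (r χ ψ - 1) := by
    have := hu (u * η ψ)
    rw [Units.val_mul, mul_pow, ← mul_assoc, ← hx] at this
    simpa [mul_sub, r] using this
  have htwo : 0 ≤ ψ (x : K) * (r ψ ψ - 1) + φ (x : K) * (r φ ψ - 1) := by
    have hrest : ∑ χ ∈ (Finset.univ.erase ψ).erase φ, χ (x : K) * (r χ ψ - 1) ≤ 0 :=
      Finset.sum_nonpos fun χ hχ => mul_nonpos_of_nonneg_of_nonpos (hpos χ).le
        (sub_nonpos.mpr (hr χ (Finset.ne_of_mem_erase (Finset.mem_of_mem_erase hχ))).le)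
    rw [← Finset.add_sum_erase _ _ (Finset.mem_univ ψ),
      ← Finset.add_sum_erase _ _ (Finset.mem_erase.mpr ⟨hne, Finset.mem_univ φ⟩)] at htrace
    linarith
  calc φ (x : K) ≤ (r ψ ψ - 1) / (1 - r φ ψ) * ψ (x : K) := by
        rw [div_mul_eq_mul_div, le_div_iff₀ (sub_pos.mpr (hr φ hne))]
        linarith
    _ ≤ max c 1 * ψ (x : K) :=
        mul_le_mul_of_nonneg_right ((hc ⟨(φ, ψ), rfl⟩).trans (le_max_left _ _)) (hpos ψ).le

lemma exists_finset_sqClass_of_nm_lt (hK : TotReal K) (n : ℤ) :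
    ∃ T : Finset (𝓞 K), (∀ s ∈ T, TPos s) ∧
      ∀ γ : 𝓞 K, TPos γ → Nm γ < n → ∃ u : (𝓞 K)ˣ, γ * (u : 𝓞 K) ^ 2 ∈ T := by
  obtain ⟨c, hc, hbal⟩ := exists_unit_embedding_le_mul hK
  refine ⟨(finite_setOf_embedding_le hK (c * n)).toFinset, by simp +contextual, fun γ hγ hn => ?_⟩
  obtain ⟨u, hu⟩ := hbal γ hγ
  have hpos : TPos (γ * (u : 𝓞 K) ^ 2) := hγ.mul_sq u.ne_zero
  refine ⟨u, (Set.Finite.mem_toFinset _).mpr ⟨hpos, fun φ => ?_⟩⟩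
  obtain ⟨ψ, hψ⟩ := hpos.exists_embedding_le_nm hK
  rw [nm_mul_unit_sq] at hψ
  have hle : ψ ((γ * (u : 𝓞 K) ^ 2 : 𝓞 K) : K) ≤ n := hψ.trans (by exact_mod_cast hn.le)
  exact (hu φ ψ).trans (by gcongr)

end Units

section Splitting

lemma exists_integer_approx (K : Type) [Field K] [NumberField K] :
    ∃ (r : K → 𝓞 K) (D : ℝ), (∀ x : 𝓞 K, r x = x) ∧
      ∀ (x : K) (φ : K →+* ℝ), |φ x - φ (r x : K)| ≤ D := by
  let b := integralBasis K
  let e := RingOfIntegers.basis K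
  refine ⟨fun x => ∑ i, ⌊b.repr x i⌋ • e i, ∑ φ : K →+* ℝ, ∑ i, |φ (b i)|, fun x => ?_,
    fun x φ => ?_⟩
  · conv_rhs => rw [← e.sum_repr x]
    simp [b, e, integralBasis_repr_apply]
  · have hr : φ x - φ ((∑ i, ⌊b.repr x i⌋ • e i : 𝓞 K) : K) =
        ∑ i, (Int.fract (b.repr x i) : ℝ) * φ (b i) := by
      have hx : φ x = ∑ i, (b.repr x i : ℝ) * φ (b i) := by
        conv_lhs => rw [← b.sum_repr x]
        simp [Rat.smul_def]
      rw [hx]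
      simp [b, e, integralBasis_apply, Int.fract, sub_mul]
    calc |φ x - φ ((∑ i, ⌊b.repr x i⌋ • e i : 𝓞 K) : K)|
        ≤ ∑ i, |(Int.fract (b.repr x i) : ℝ) * φ (b i)| := by
          rw [hr]; exact Finset.abs_sum_le_sum_abs _ _
      _ ≤ ∑ i, |φ (b i)| := Finset.sum_le_sum fun i _ => by
          rw [abs_mul]
          refine mul_le_of_le_one_left (abs_nonneg _) ?_
          rw [abs_of_nonneg (by exact_mod_cast Int.fract_nonneg _)]
          exact_mod_cast (Int.fract_lt_one _).le
      _ ≤ ∑ φ : K →+* ℝ, ∑ i, |φ (b i)| :=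
          Finset.single_le_sum (f := fun φ : K →+* ℝ => ∑ i, |φ (b i)|)
            (fun _ _ => Finset.sum_nonneg fun _ _ => abs_nonneg _) (Finset.mem_univ φ)

lemma exists_equipartition (K : Type) [Field K] [NumberField K] :
    ∃ D : ℝ, ∀ (x : 𝓞 K) (m : ℕ), m ≠ 0 → ∃ f : ℕ → 𝓞 K,
      ∑ j ∈ Finset.range m, f j = x ∧ ∀ (j : ℕ) (φ : K →+* ℝ), |φ (f j : K) - φ x / m| ≤ D := by
  obtain ⟨r, D, hr, hD⟩ := exists_integer_approx K
  refine ⟨D + D, fun x m hm => ?_⟩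
  let y (j : ℕ) : K := j / m * x
  refine ⟨fun j => r (y (j + 1)) - r (y j), ?_, fun j φ => ?_⟩
  · have hy0 : r (y 0) = 0 := by simpa [y] using hr 0
    have hym : r (y m) = x := by simpa [y, hm] using hr x
    rw [Finset.sum_range_sub fun j => r (y j), hy0, hym, sub_zero]
  · have hstep : φ (x : K) / m = φ (y (j + 1)) - φ (y j) := by
      simp only [y, map_mul, map_div₀, map_natCast, Nat.cast_add, Nat.cast_one, map_add, map_one]
      ring
    have hsub : φ ((r (y (j + 1)) - r (y j) : 𝓞 K) : K) - φ x / m =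
        (φ (y j) - φ (r (y j) : K)) - (φ (y (j + 1)) - φ (r (y (j + 1)) : K)) := by
      rw [hstep]
      simp only [map_sub]
      ring
    rw [hsub]
    exact (abs_sub _ _).trans (add_le_add (hD _ φ) (hD _ φ))

lemma exists_nat_div_mem_Icc {k : Type*} [Field k] [LinearOrder k] [IsStrictOrderedRing k]
    [FloorSemiring k] {S t : k} (hS : 0 < S) (h : S ≤ t) :
    ∃ m : ℕ, m ≠ 0 ∧ t / m ∈ Set.Icc S (2 * S) := by
  have hm : 1 ≤ ⌊t / S⌋₊ := (Nat.one_le_floor_iff _).mpr ((one_le_div hS).mpr h)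
  have hm' : (1 : k) ≤ ⌊t / S⌋₊ := by exact_mod_cast hm
  have hlow := Nat.floor_le (div_pos (hS.trans_le h) hS).le
  have hupp := (Nat.lt_floor_add_one (t / S)).le
  rw [le_div_iff₀ hS] at hlow
  rw [div_le_iff₀ hS] at hupp
  refine ⟨⌊t / S⌋₊, Nat.one_le_iff_ne_zero.mp hm, ?_, ?_⟩
  · rw [le_div_iff₀ (by linarith)]
    linarith
  · rw [div_le_iff₀ (by linarith)]
    nlinarith

lemma exists_embedding_le_or_mem_closure (hK : TotReal K) {A c : ℝ} (hA : 0 ≤ A) (hc : 1 ≤ c) :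
    ∃ B : ℝ, ∀ x : 𝓞 K, (∀ φ ψ : K →+* ℝ, φ (x : K) ≤ c * ψ (x : K)) →
      (∀ φ : K →+* ℝ, φ (x : K) ≤ B) ∨
        x ∈ AddSubmonoid.closure {y : 𝓞 K | ∀ φ : K →+* ℝ, A < φ (y : K) ∧ φ (y : K) ≤ B} := by
  obtain ⟨D, hD⟩ := exists_equipartition K
  obtain ⟨φ₀⟩ := nonempty_realEmbedding hK
  have hD0 : 0 ≤ D := by
    obtain ⟨f, -, hf⟩ := hD 0 1 one_ne_zero
    exact (abs_nonneg _).trans (hf 0 φ₀)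
  have hc0 : 0 < c := by linarith
  set S := c * (A + D + 1)
  have hS0 : 0 < S := by positivity
  refine ⟨2 * c * S + D, fun x hx => ?_⟩
  refine (lt_or_ge (φ₀ (x : K)) S).imp (fun hlt φ => ?_) fun hge => ?_
  · calc φ (x : K) ≤ c * φ₀ (x : K) := hx φ φ₀
      _ ≤ c * S := by gcongr
      _ ≤ 2 * c * S + D := by nlinarith [mul_pos hc0 hS0]
  · obtain ⟨m, hm, hlow, hupp⟩ := exists_nat_div_mem_Icc hS0 hge
    obtain ⟨f, rfl, hf⟩ := hD x m hm
    refine sum_mem fun j _ => AddSubmonoid.subset_closure fun φ => ?_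
    have hφ := abs_le.mp (hf j φ)
    set x := ∑ j ∈ Finset.range m, f j
    have hlow' : A + D + 1 ≤ φ (x : K) / m := by
      refine le_of_mul_le_mul_left ?_ hc0
      calc c * (A + D + 1) ≤ φ₀ (x : K) / m := hlow
        _ ≤ c * φ (x : K) / m := by gcongr; exact hx φ₀ φ
        _ = c * (φ (x : K) / m) := mul_div_assoc _ _ _
    have hupp' : φ (x : K) / m ≤ 2 * c * S := by
      calc φ (x : K) / m ≤ c * φ₀ (x : K) / m := by gcongr; exact hx φ φ₀
        _ = c * (φ₀ (x : K) / m) := mul_div_assoc _ _ _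
        _ ≤ c * (2 * S) := by gcongr
        _ = 2 * c * S := by ring
    constructor <;> linarith

lemma exists_finset_sqClass_mem_closure (hK : TotReal K) {α : 𝓞 K} (hα : TPos α) :
    ∃ T : Finset (𝓞 K), (∀ s ∈ T, TPos s ∧ Nm α ≤ Nm s ∧ ¬ SqAssociated s α) ∧
      ∀ γ : 𝓞 K, TPos γ → Nm α ≤ Nm γ → ¬ SqAssociated γ α →
        ∃ u : (𝓞 K)ˣ, γ * (u : 𝓞 K) ^ 2 ∈ AddSubmonoid.closure (T : Set (𝓞 K)) := by
  classical
  set A := ∑ φ : K →+* ℝ, φ (α : K)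
  have hA (φ : K →+* ℝ) : φ (α : K) ≤ A :=
    Finset.single_le_sum (f := fun φ : K →+* ℝ => φ (α : K)) (fun ψ _ => (hα ψ).le)
      (Finset.mem_univ φ)
  have hA0 : 0 ≤ A := Finset.sum_nonneg fun φ _ => (hα φ).le
  obtain ⟨c, hc, hbal⟩ := exists_unit_embedding_le_mul hK
  obtain ⟨B, hB⟩ := exists_embedding_le_or_mem_closure hK hA0 hc
  refine ⟨(finite_setOf_embedding_le hK B).toFinset.filter
    fun s => Nm α ≤ Nm s ∧ ¬ SqAssociated s α, by simp +contextual, fun γ hγ hn hcl => ?_⟩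
  obtain ⟨u, hu⟩ := hbal γ hγ
  refine ⟨u, (hB _ hu).elim (fun hle => AddSubmonoid.subset_closure ?_) fun hmem => ?_⟩
  · have hcl' : ¬ SqAssociated (γ * (u : 𝓞 K) ^ 2) α := fun h =>
      hcl ((sqAssociated_mul_unit_sq γ u).symm.trans h)
    simpa [nm_mul_unit_sq, hn, hcl', hγ.mul_sq u.ne_zero] using hle
  · refine AddSubmonoid.closure_mono (fun x hx => ?_) hmem
    have hlt : Nm α < Nm x := hα.nm_lt_nm hK fun φ => (hA φ).trans_lt (hx φ).1
    have hcl' : ¬ SqAssociated x α := fun h => hlt.ne' h.nm_eq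
    have hpos : TPos x := fun φ => hA0.trans_lt (hx φ).1
    simpa [hlt.le, hcl', hpos] using fun φ => (hx φ).2

end Splitting

namespace QLat

variable {L M : QLat K}

lemma Rep.mul_sq {a : 𝓞 K} (h : L.Rep a) (x : 𝓞 K) : L.Rep (a * x ^ 2) := by
  obtain ⟨v, rfl⟩ := h
  exact ⟨x • v, by rw [QuadraticMap.map_smul, smul_eq_mul]; ring⟩

lemma Rep.congr {a b : 𝓞 K} (hab : SqAssociated a b) (h : L.Rep b) : L.Rep a := by
  obtain ⟨ε, rfl⟩ := hab
  exact h.mul_sq ε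

lemma Rep.of_mul_unit_sq {a : 𝓞 K} {u : (𝓞 K)ˣ} (h : L.Rep (a * (u : 𝓞 K) ^ 2)) : L.Rep a :=
  h.congr (sqAssociated_mul_unit_sq a u).symm

lemma PosDef.embedding_nonneg (hL : L.PosDef) (v : L.carrier) (φ : K →+* ℝ) :
    0 ≤ φ (L.Q v : K) := by
  rcases eq_or_ne v 0 with rfl | hv
  · simp
  · exact (hL v hv φ).le

/-- The orthogonal sum `L ⊥ M`, used to enlarge a lattice so that it represents more classes. -/
def prod (L M : QLat K) : QLat K :=
  haveI : NoZeroSMulDivisors (𝓞 K) (L.carrier × M.carrier) :=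
    ⟨fun h => or_iff_not_imp_left.mpr fun hc => Prod.ext
      ((smul_eq_zero.mp (congrArg Prod.fst h)).resolve_left hc)
      ((smul_eq_zero.mp (congrArg Prod.snd h)).resolve_left hc)⟩
  { carrier := L.carrier × M.carrier
    Q := L.Q.prod M.Q }

lemma prod_rep_iff {a : 𝓞 K} : (L.prod M).Rep a ↔ ∃ v w, L.Q v + M.Q w = a :=
  Prod.exists

lemma Rep.prod_left {a : 𝓞 K} (h : L.Rep a) (M : QLat K) : (L.prod M).Rep a := by
  obtain ⟨v, rfl⟩ := h
  exact prod_rep_iff.mpr ⟨v, 0, by simp⟩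

lemma Rep.prod_right {a : 𝓞 K} (h : M.Rep a) (L : QLat K) : (L.prod M).Rep a := by
  obtain ⟨w, rfl⟩ := h
  exact prod_rep_iff.mpr ⟨0, w, by simp⟩

lemma PosDef.prod (hL : L.PosDef) (hM : M.PosDef) : (L.prod M).PosDef := by
  rintro ⟨v, w⟩ hvw φ
  change 0 < φ ((L.Q v + M.Q w : 𝓞 K) : K)
  simp only [map_add]
  rcases eq_or_ne v 0 with rfl | hv
  · have hw : w ≠ 0 := fun h => hvw (by rw [h]; rfl)
    exact add_pos_of_nonneg_of_pos (hL.embedding_nonneg _ φ) (hM w hw φ)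
  · exact add_pos_of_pos_of_nonneg (hL v hv φ) (hM.embedding_nonneg w φ)

section Diag

variable {ι : Type} [Fintype ι] {w : ι → 𝓞 K}

/-- The diagonal lattice `⟨w i⟩ᵢ`, i.e. the form `∑ w i xᵢ²` on `𝒪^ι`; repeating a value of `w`
gives several orthogonal copies of it. -/
noncomputable def diag (w : ι → 𝓞 K) : QLat K :=
  haveI : NoZeroSMulDivisors (𝓞 K) (ι → 𝓞 K) := inferInstance
  { carrier := ι → 𝓞 K
    Q := QuadraticMap.weightedSumSquares (𝓞 K) w }

lemma diag_Q_apply (w x : ι → 𝓞 K) : (diag w).Q x = ∑ i, w i * x i ^ 2 := by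
  simp_rw [pow_two]
  exact QuadraticMap.weightedSumSquares_apply w x

lemma diag_rep_iff {a : 𝓞 K} : (diag w).Rep a ↔ ∃ x : ι → 𝓞 K, ∑ i, w i * x i ^ 2 = a :=
  exists_congr fun x : ι → 𝓞 K => by rw [diag_Q_apply w x]

lemma prod_diag_rep_iff {a : 𝓞 K} :
    (L.prod (diag w)).Rep a ↔ ∃ v, ∃ x : ι → 𝓞 K, L.Q v + ∑ i, w i * x i ^ 2 = a :=
  prod_rep_iff.trans <| exists_congr fun v => exists_congr fun x : ι → 𝓞 K => by
    rw [diag_Q_apply w x]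

lemma diag_rep_apply (w : ι → 𝓞 K) (i : ι) : (diag w).Rep (w i) := by
  classical
  exact diag_rep_iff.mpr ⟨Pi.single i 1, by simp [Pi.single_apply]⟩

lemma mul_sq_tle_diag (hw : ∀ i, TPos (w i)) (x : ι → 𝓞 K) (i : ι) :
    TLE (w i * x i ^ 2) (∑ j, w j * x j ^ 2) := tle_iff.mpr fun φ => by
  simp only [map_sum]
  exact Finset.single_le_sum (f := fun j => φ ((w j * x j ^ 2 : 𝓞 K) : K))
    (fun j _ => (hw j).embedding_mul_sq_nonneg (x j) φ) (Finset.mem_univ i)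

lemma diag_posDef (hw : ∀ i, TPos (w i)) : (diag w).PosDef := by
  intro (x : ι → 𝓞 K) hx φ
  obtain ⟨i, hi⟩ : ∃ i, x i ≠ 0 := Function.ne_iff.mp hx
  rw [diag_Q_apply w x]
  exact ((hw i).mul_sq hi φ).trans_le (tle_iff.mp (mul_sq_tle_diag hw x i) φ)

lemma diag_rep_of_mem_closure {a : 𝓞 K} (ha : a ∈ AddSubmonoid.closure (Set.range w)) :
    (diag fun p : ι × Fin 4 => w p.1).Rep a := by
  obtain ⟨n, rfl⟩ := AddSubmonoid.mem_closure_range_iff_of_fintype.mp ha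
  choose a b c d h using fun i => Nat.sum_four_squares (n i)
  refine diag_rep_iff.mpr ⟨fun p => (![a p.1, b p.1, c p.1, d p.1] p.2 : ℕ), ?_⟩
  rw [Fintype.sum_prod_type]
  refine Finset.sum_congr rfl fun i _ => ?_
  rw [← h i, nsmul_eq_mul, Fin.sum_univ_four]
  simp only [Matrix.cons_val, Matrix.cons_val_zero, Matrix.cons_val_one, Nat.cast_add, Nat.cast_pow]
  ring

end Diag

end QLat

section Critical

/-- `α` is a truant of `L`: it is not represented by `L`, although every totally positive integer of
smaller norm is. A totally positive truant of a positive definite lattice is critical. -/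
def QLat.IsTruant (L : QLat K) (α : 𝓞 K) : Prop :=
  ¬ L.Rep α ∧ ∀ γ : 𝓞 K, TPos γ → Nm γ < Nm α → L.Rep γ

lemma QLat.not_prod_diag_rep (hK : TotReal K) {L : QLat K} {ι : Type} [Fintype ι] {w : ι → 𝓞 K}
    {α : 𝓞 K} (hL : L.PosDef) (hα : ¬ L.Rep α)
    (hw : ∀ i, TPos (w i) ∧ Nm α ≤ Nm (w i) ∧ ¬ SqAssociated (w i) α) :
    ¬ (L.prod (diag w)).Rep α := by
  rw [prod_diag_rep_iff]
  rintro ⟨v, x, hvx⟩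
  obtain ⟨i, hi⟩ : ∃ i, x i ≠ 0 := by
    by_contra! h0
    exact hα ⟨v, by simpa [h0] using hvx⟩
  have hle : TLE (w i * x i ^ 2) α := tle_iff.mpr fun φ => by
    have hterm := tle_iff.mp (mul_sq_tle_diag (fun j => (hw j).1) x i) φ
    have hv := hL.embedding_nonneg v φ
    rw [← hvx]
    simp only [map_add]
    linarith
  obtain ⟨hpos, hn, hcl⟩ := hw i
  exact hcl (sqAssociated_of_mul_sq_tle hK hpos hi hle hn)

theorem QLat.IsTruant.crit (hK : TotReal K) {L : QLat K} {α : 𝓞 K} (h : L.IsTruant α)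
    (hL : L.PosDef) (hα : TPos α) : Crit α := by
  obtain ⟨T, hT, hgen⟩ := exists_finset_sqClass_mem_closure hK hα
  have hw (p : T × Fin 4) := hT p.1 p.1.2
  refine ⟨hα, L.prod (diag fun p : T × Fin 4 => (p.1 : 𝓞 K)),
    hL.prod (diag_posDef fun p => (hw p).1), fun γ hγ hcl => ?_, not_prod_diag_rep hK hL h.1 hw⟩
  rcases lt_or_ge (Nm γ) (Nm α) with hlt | hge
  · exact (h.2 γ hγ hlt).prod_left _
  · obtain ⟨u, hu⟩ := hgen γ hγ hge hcl
    rw [← Subtype.range_coe (s := (T : Set (𝓞 K)))] at hu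
    exact (diag_rep_of_mem_closure hu).of_mul_unit_sq.prod_right L

lemma QLat.isTruant_one_of_forall_eq_zero (hK : TotReal K) {L : QLat K}
    (hL : ∀ v : L.carrier, v = 0) : L.IsTruant 1 := by
  refine ⟨fun ⟨v, hv⟩ => ?_, fun γ hγ hlt => ?_⟩
  · rw [hL v, map_zero] at hv
    exact zero_ne_one hv
  · have := hγ.nm_pos hK
    rw [nm_one] at hlt
    lia

lemma crit_one (hK : TotReal K) : Crit (1 : 𝓞 K) := by
  have hzero (v : (QLat.diag (Empty.elim : Empty → 𝓞 K)).carrier) : v = 0 :=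
    Subsingleton.elim (α := Empty → 𝓞 K) v 0
  exact (QLat.isTruant_one_of_forall_eq_zero hK hzero).crit hK
    (QLat.diag_posDef fun i => i.elim) tPos_one

lemma IsCritSet.exists_sqAssociated {C : Set (𝓞 K)} (hC : IsCritSet C) {α : 𝓞 K} (h : Crit α) :
    ∃ c ∈ C, SqAssociated c α := by
  by_contra! hne
  obtain ⟨hα, L, hL, hrep, hn⟩ := h
  exact hn ((hC.2 L hL).mp (fun c hc => hrep c (hC.1 c hc) (hne c hc)) α hα)

lemma Crit.squarefree (hK : TotReal K) {α : 𝓞 K} (h : Crit α) : Squarefree α := by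
  rintro x ⟨β, rfl⟩
  by_contra hx
  obtain ⟨hα, L, -, hrep, hn⟩ := h
  rw [← pow_two, mul_comm] at hα hrep hn
  have hβ : TPos β := hα.of_mul_sq
  refine hn ((hrep β hβ fun hassoc => hx (isUnit_of_nm_sq_eq_one ?_)).mul_sq x)
  have hnm : Nm β = Nm β * Nm x ^ 2 := by
    conv_lhs => rw [SqAssociated.nm_eq hassoc, pow_two, nm_mul, nm_mul, ← pow_two]
  exact (left_eq_mul₀ (hβ.nm_pos hK).ne').mp hnm

lemma QLat.not_diag_rep_of_squarefree (hK : TotReal K) {ι : Type} [Fintype ι] {w : ι → 𝓞 K}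
    {α : 𝓞 K} (hw : ∀ i, TPos (w i)) (hnm : ∀ i, Nm (w i) < Nm α)
    (hone : {i | SqAssociated (w i) 1}.Subsingleton) (hsf : Squarefree α)
    (hα : ∀ β : 𝓞 K, TPos β → TLE β α → β = 1 ∨ β = α) : ¬ (diag w).Rep α := by
  rw [diag_rep_iff]
  rintro ⟨x, hx⟩
  have hterm (i : ι) (hi : x i ≠ 0) : w i * x i ^ 2 = 1 := by
    refine (hα _ ((hw i).mul_sq hi) (hx ▸ mul_sq_tle_diag hw x i)).resolve_right fun heq => ?_
    obtain ⟨u, hu⟩ := hsf (x i) ⟨w i, by rw [← heq]; ring⟩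
    rw [← hu] at heq
    exact (hnm i).ne' (SqAssociated.nm_eq ⟨u, heq.symm⟩)
  have hassoc (i : ι) (hi : x i ≠ 0) : SqAssociated (w i) 1 := by
    obtain ⟨u, hu⟩ : IsUnit (x i) :=
      (isUnit_pow_iff two_ne_zero).mp (IsUnit.of_mul_eq_one_right _ (hterm i hi))
    exact .symm ⟨u, by rw [hu, hterm i hi]⟩
  obtain ⟨i, hi⟩ : ∃ i, x i ≠ 0 := by
    by_contra! h0
    exact hsf.ne_zero (by simp [← hx, h0])
  have hsum : ∑ j, w j * x j ^ 2 = w i * x i ^ 2 := Fintype.sum_eq_single i fun j hji => by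
    have hj : x j = 0 := by
      by_contra hj
      exact hji (hone (hassoc j hj) (hassoc i hi))
    simp [hj]
  have hlt := hnm i
  rw [← hx, hsum, hterm i hi, nm_one] at hlt
  have := (hw i).nm_pos hK
  lia

lemma QLat.exists_isTruant_of_squarefree (hK : TotReal K) {α : 𝓞 K} (hsf : Squarefree α)
    (hα : ∀ β : 𝓞 K, TPos β → TLE β α → β = 1 ∨ β = α) :
    ∃ L : QLat K, L.PosDef ∧ L.IsTruant α := by
  classical
  obtain ⟨T, hT, hTγ⟩ := exists_finset_sqClass_of_nm_lt hK (Nm α)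
  let W := (insert 1 T).filter fun s => Nm s < Nm α ∧ (SqAssociated s 1 → s = 1)
  have hmem {s : 𝓞 K} : s ∈ W ↔
      (s = 1 ∨ s ∈ T) ∧ Nm s < Nm α ∧ (SqAssociated s 1 → s = 1) := by simp [W]
  have hpos (s : W) : TPos (s : 𝓞 K) := (hmem.mp s.2).1.elim (fun h => h ▸ tPos_one) (hT s)
  refine ⟨diag ((↑) : W → 𝓞 K), diag_posDef hpos,
    not_diag_rep_of_squarefree hK hpos (fun s => (hmem.mp s.2).2.1) ?_ hsf hα,
    fun γ hγ hlt => ?_⟩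
  · exact fun s hs t ht =>
      Subtype.ext (((hmem.mp s.2).2.2 hs).trans ((hmem.mp t.2).2.2 ht).symm)
  · by_cases hone : SqAssociated γ 1
    · have h1 : (1 : 𝓞 K) ∈ W := hmem.mpr ⟨.inl rfl, hone.nm_eq ▸ hlt, fun _ => rfl⟩
      exact (diag_rep_apply ((↑) : W → 𝓞 K) ⟨1, h1⟩).congr hone
    · obtain ⟨u, hu⟩ := hTγ γ hγ hlt
      have hγu : γ * (u : 𝓞 K) ^ 2 ∈ W := hmem.mpr ⟨.inr hu, (nm_mul_unit_sq γ u).symm ▸ hlt,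
        fun h => (hone ((sqAssociated_mul_unit_sq γ u).symm.trans h)).elim⟩
      exact (diag_rep_apply ((↑) : W → 𝓞 K) ⟨_, hγu⟩).of_mul_unit_sq

theorem crit_iff_squarefree (hK : TotReal K) {α : 𝓞 K} (hpos : TPos α)
    (hα : ∀ β : 𝓞 K, TPos β → TLE β α → β = 1 ∨ β = α) : Crit α ↔ Squarefree α := by
  refine ⟨fun h => h.squarefree hK, fun hsf => ?_⟩
  obtain ⟨L, hL, htr⟩ := QLat.exists_isTruant_of_squarefree hK hsf hα
  exact htr.crit hK hL hpos

end Critical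

end NumberField

theorem stmt9_general {K : Type} [Field K] [NumberField K] (hK : TotReal K) :
    (∀ L : QLat K, (∀ v : L.carrier, v = 0) →
      (¬ L.Rep 1 ∧ ∀ γ : 𝓞 K, TPos γ → Nm γ < Nm (1 : 𝓞 K) → L.Rep γ)) ∧
    (∀ C : Set (𝓞 K), IsCritSet C → ∃ c ∈ C, ∃ ε : (𝓞 K)ˣ, c = (ε : 𝓞 K) ^ 2) ∧
    (Crit (2 : 𝓞 K) ↔ ∀ ω : 𝓞 K, ω ^ 2 ∣ 2 → IsUnit ω) := by
  refine ⟨fun L hL => QLat.isTruant_one_of_forall_eq_zero hK hL, fun C hC => ?_, ?_⟩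
  · obtain ⟨c, hc, ε, hε⟩ := hC.exists_sqAssociated (crit_one hK)
    exact ⟨c, hc, ε, by rw [hε, one_mul]⟩
  · have hpos : TPos (2 : 𝓞 K) := fun φ => by simp only [map_ofNat, Nat.ofNat_pos]
    rw [crit_iff_squarefree hK hpos fun β => eq_one_or_eq_two_of_tle hK]
    simp only [Squarefree, pow_two]

/-- under hypotheses (a) and (b), the zero lattice has truant $1$,
$1$ (i.e., its class) belongs to every universality criterion set, and $2$ belongs to the
minimal criterion set (is critical) iff $2$ is squarefree in $\mathcal O_K$. -/
theorem stmt9 {K : Type} [Field K] [NumberField K] (hK : TotReal K)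
    (ha : ∀ α : 𝓞 K, TPos α → TLE α 2 → ∃ z : ℤ, α = (z : 𝓞 K))
    (hb : ∀ α ω : 𝓞 K, (2 : 𝓞 K) = α * ω ^ 2 →
      ∃ ε : (𝓞 K)ˣ, ∃ z : ℤ, (ε : 𝓞 K) * ω = (z : 𝓞 K)) :
    (∀ L : QLat K, (∀ v : L.carrier, v = 0) →
      (¬ L.Rep 1 ∧ ∀ γ : 𝓞 K, TPos γ → Nm γ < Nm (1 : 𝓞 K) → L.Rep γ)) ∧
    (∀ C : Set (𝓞 K), IsCritSet C → ∃ c ∈ C, ∃ ε : (𝓞 K)ˣ, c = (ε : 𝓞 K) ^ 2) ∧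
    (Crit (2 : 𝓞 K) ↔ ∀ ω : 𝓞 K, ω ^ 2 ∣ 2 → IsUnit ω) :=
  stmt9_general hK
end

section
/- Let K = ℚ(√5). The quadratic form ⟨1,1,3,3⟩ over O_K, i.e., Q(x,y,z,w) = x² + y² + 3z² + 3w², does not represent (7+√5)/2, even though it represents every positive rational integer. -/
open NumberField

/-!
Over `ℤ`, every Eisenstein norm has the form `x ^ 2 + 3 * z ^ 2`, so it suffices to write `n` as
`N(u) + N(v)` with `u`, `v` in `ℤ[ω]`. These values are closed under multiplication, as the sums of
four squares are, and Lagrange's descent reduces a multiple `p * m` with `0 < m < p` to `p` itself.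

Over `ℤ[φ]` with `φ = (1 + √5) / 2`, the coefficient of `1` in `(a + b * φ) ^ 2` is `a ^ 2 + b ^ 2`.
Comparing these coefficients in `x ^ 2 + y ^ 2 + 3 * z ^ 2 + 3 * w ^ 2 = 3 + φ = (7 + √5) / 2` gives
`z = w = 0`, which is impossible modulo `4`, or `x = y = 0`, which is impossible modulo `3`.
-/

section NormForm

variable {R : Type*} [CommRing R] {a b : R}

theorem star_algebraMap_quadraticAlgebra (r : R) :
    star (algebraMap R (QuadraticAlgebra R a b) r) = algebraMap R _ r := by
  ext <;> simp

theorem norm_add_norm_mul_norm_add_norm (u v s t : QuadraticAlgebra R a b) :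
    (u.norm + v.norm) * (s.norm + t.norm) =
      (u * star s + v * star t).norm + (u * t - v * s).norm := by
  simp only [QuadraticAlgebra.norm_def, QuadraticAlgebra.re_add, QuadraticAlgebra.re_mul,
    QuadraticAlgebra.re_star, QuadraticAlgebra.im_star, QuadraticAlgebra.im_add,
    QuadraticAlgebra.im_mul, QuadraticAlgebra.re_sub, QuadraticAlgebra.im_sub]
  ring

theorem norm_quadraticAlgebra_smul (m : R) (u : QuadraticAlgebra R a b) :
    (m • u).norm = m ^ 2 * u.norm := by
  simp only [QuadraticAlgebra.norm_def, QuadraticAlgebra.re_smul, QuadraticAlgebra.im_smul,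
    smul_eq_mul]
  ring

theorem dvd_norm_sub_smul_sub_norm (m : R) (u k : QuadraticAlgebra R a b) :
    m ∣ (u - m • k).norm - u.norm := by
  refine ⟨m * k.norm - (u * star k).trace, ?_⟩
  simp only [QuadraticAlgebra.norm_def, QuadraticAlgebra.trace_def, QuadraticAlgebra.re_sub,
    QuadraticAlgebra.im_sub, QuadraticAlgebra.re_smul, QuadraticAlgebra.im_smul,
    QuadraticAlgebra.re_mul, QuadraticAlgebra.im_mul, QuadraticAlgebra.re_star,
    QuadraticAlgebra.im_star, smul_eq_mul]
  ring

variable (a b) in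
/-- The values of the binary Hermitian form `N(u) + N(v)`, where `N` is the norm of the quadratic
algebra `R[ω]` with `ω ^ 2 = a + b * ω`. -/
def IsSumTwoNorms (n : R) : Prop :=
  ∃ u v : QuadraticAlgebra R a b, u.norm + v.norm = n

theorem IsSumTwoNorms.mul {m n : R} (hm : IsSumTwoNorms a b m) (hn : IsSumTwoNorms a b n) :
    IsSumTwoNorms a b (m * n) := by
  obtain ⟨u, v, rfl⟩ := hm
  obtain ⟨s, t, rfl⟩ := hn
  exact ⟨_, _, (norm_add_norm_mul_norm_add_norm u v s t).symm⟩

theorem isSumTwoNorms_mul_of_norm_sub_smul [IsDomain R] {m n q : R} (hm : m ≠ 0)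
    {u v k l : QuadraticAlgebra R a b} (huv : u.norm + v.norm = m * n)
    (hkl : (u - m • k).norm + (v - m • l).norm = m * q) : IsSumTwoNorms a b (n * q) := by
  have hermitian_eq : u * star (u - m • k) + v * star (v - m • l) =
      m • (algebraMap R _ n - (u * star k + v * star l)) := by
    have huv' := congrArg (algebraMap R (QuadraticAlgebra R a b)) huv
    simp only [map_add, map_mul, QuadraticAlgebra.algebraMap_norm_eq_mul_star] at huv'
    simp only [Algebra.smul_def, star_sub, star_mul, mul_sub,
      star_algebraMap_quadraticAlgebra]
    linear_combination huv'
  have det_eq : u * (v - m • l) - v * (u - m • k) = m • (v * k - u * l) := by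
    simp only [Algebra.smul_def]
    ring
  refine ⟨algebraMap R _ n - (u * star k + v * star l), v * k - u * l,
    mul_left_cancel₀ (pow_ne_zero 2 hm) ?_⟩
  calc m ^ 2 * ((algebraMap R _ n - (u * star k + v * star l)).norm + (v * k - u * l).norm)
      = (m • (algebraMap R _ n - (u * star k + v * star l))).norm +
          (m • (v * k - u * l)).norm := by
        rw [norm_quadraticAlgebra_smul, norm_quadraticAlgebra_smul, mul_add]
    _ = (u.norm + v.norm) * ((u - m • k).norm + (v - m • l).norm) := by
        rw [norm_add_norm_mul_norm_add_norm, hermitian_eq, det_eq]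
    _ = m ^ 2 * (n * q) := by
        rw [huv, hkl]
        ring

end NormForm

section Eisenstein

/-- The ring `ℤ[ω]` of Eisenstein integers, with `ω ^ 2 = -1 - ω`. -/
abbrev EisensteinInt : Type := QuadraticAlgebra ℤ (-1) (-1)

theorem EisensteinInt.four_mul_norm (u : EisensteinInt) :
    4 * u.norm = (2 * u.re - u.im) ^ 2 + 3 * u.im ^ 2 := by
  rw [QuadraticAlgebra.norm_def]
  ring

theorem EisensteinInt.norm_nonneg (u : EisensteinInt) : 0 ≤ u.norm := by
  have := u.four_mul_norm
  have := sq_nonneg (2 * u.re - u.im)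
  have := sq_nonneg u.im
  linarith

theorem EisensteinInt.norm_eq_zero_iff {u : EisensteinInt} : u.norm = 0 ↔ u = 0 := by
  refine ⟨fun h ↦ ?_, fun h ↦ by rw [h, QuadraticAlgebra.norm_zero]⟩
  have h4 := u.four_mul_norm
  have him : u.im = 0 := by nlinarith [sq_nonneg (2 * u.re - u.im)]
  have hre : u.re = 0 := by nlinarith
  exact QuadraticAlgebra.ext hre him

theorem EisensteinInt.norm_add_norm_eq_zero_iff {u v : EisensteinInt} :
    u.norm + v.norm = 0 ↔ u = 0 ∧ v = 0 := by
  rw [add_eq_zero_iff_of_nonneg u.norm_nonneg v.norm_nonneg, norm_eq_zero_iff, norm_eq_zero_iff]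

theorem exists_two_mul_abs_sub_mul_le (x : ℤ) {m : ℕ} (hm : 0 < m) :
    ∃ k : ℤ, 2 * |x - m * k| ≤ m := by
  refine ⟨x.bdiv m, ?_⟩
  rw [← Int.bmod_eq_self_sub_mul_bdiv]
  have lower := Int.le_bmod (x := x) hm
  have upper := Int.bmod_lt (x := x) hm
  rcases abs_cases (x.bmod m) with ⟨h, -⟩ | ⟨h, -⟩ <;> omega

-- Rounding `re` and `im` separately only gives `3 / 4`, which is too weak for a sum of two norms;
-- rounding the orthogonal coordinates `im` and `2 * re - im` of `four_mul_norm` gives `7 / 16`.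
theorem EisensteinInt.exists_norm_sub_smul_le (u : EisensteinInt) {m : ℕ} (hm : 0 < m) :
    ∃ k : EisensteinInt, 16 * (u - (m : ℤ) • k).norm ≤ 7 * (m : ℤ) ^ 2 := by
  obtain ⟨l, hl⟩ := exists_two_mul_abs_sub_mul_le u.im hm
  obtain ⟨k, hk⟩ := exists_two_mul_abs_sub_mul_le (2 * u.re - (u.im - m * l))
    (Nat.mul_pos two_pos hm)
  refine ⟨⟨k, l⟩, ?_⟩
  set s : EisensteinInt := u - (m : ℤ) • ⟨k, l⟩ with hs
  have hre : s.re = u.re - m * k := by simp [hs]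
  have him : s.im = u.im - m * l := by simp [hs]
  rw [← him] at hl hk
  have im_le : (2 * s.im) ^ 2 ≤ (m : ℤ) ^ 2 := by
    apply sq_le_sq.2
    rwa [abs_mul, abs_two, Nat.abs_cast]
  have re_le : (2 * s.re - s.im) ^ 2 ≤ (m : ℤ) ^ 2 := by
    apply sq_le_sq.2
    rw [Nat.abs_cast, hre]
    push_cast at hk
    rw [show 2 * (u.re - m * k) - s.im = 2 * u.re - s.im - 2 * m * k by ring]
    linarith
  linarith [s.four_mul_norm]

theorem EisensteinInt.exists_norm_sub_smul_add_norm_sub_smul_eq {u v : EisensteinInt} {m : ℕ}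
    (hm : 0 < m) (huv : (m : ℤ) ∣ u.norm + v.norm) :
    ∃ (k l : EisensteinInt) (q : ℕ), q < m ∧
      (u - (m : ℤ) • k).norm + (v - (m : ℤ) • l).norm = m * q := by
  obtain ⟨k, hk⟩ := u.exists_norm_sub_smul_le hm
  obtain ⟨l, hl⟩ := v.exists_norm_sub_smul_le hm
  have hm' : (0 : ℤ) < m := by exact_mod_cast hm
  obtain ⟨q, hq⟩ : (m : ℤ) ∣ (u - (m : ℤ) • k).norm + (v - (m : ℤ) • l).norm := by
    have := dvd_add huv (dvd_add (dvd_norm_sub_smul_sub_norm (m : ℤ) u k)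
      (dvd_norm_sub_smul_sub_norm (m : ℤ) v l))
    rwa [← add_sub_add_comm, add_sub_cancel] at this
  have q_nonneg : 0 ≤ q := by
    refine nonneg_of_mul_nonneg_right ?_ hm'
    rw [← hq]
    exact add_nonneg (norm_nonneg _) (norm_nonneg _)
  have q_lt : q < m := by
    refine lt_of_mul_lt_mul_left ?_ hm'.le
    nlinarith
  lift q to ℕ using q_nonneg
  exact ⟨k, l, q, by exact_mod_cast q_lt, hq⟩

theorem isSumTwoNorms_prime_of_mul {p : ℕ} (hp : p.Prime) {m : ℕ} (hm : 0 < m) (hmp : m < p)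
    (h : IsSumTwoNorms (-1 : ℤ) (-1) (p * m)) : IsSumTwoNorms (-1 : ℤ) (-1) p := by
  induction m using Nat.strong_induction_on with
  | _ m ih =>
  obtain ⟨u, v, huv⟩ := h
  rw [mul_comm] at huv
  obtain ⟨k, l, q, hqm, hq⟩ := EisensteinInt.exists_norm_sub_smul_add_norm_sub_smul_eq hm ⟨_, huv⟩
  have hm' : (m : ℤ) ≠ 0 := by exact_mod_cast hm.ne'
  rcases q.eq_zero_or_pos with rfl | q_pos
  · rw [Nat.cast_zero, mul_zero, EisensteinInt.norm_add_norm_eq_zero_iff, sub_eq_zero,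
      sub_eq_zero] at hq
    have m_dvd : (m : ℤ) ∣ p := by
      refine ⟨k.norm + l.norm, mul_left_cancel₀ hm' ?_⟩
      rw [← huv, hq.1, hq.2, norm_quadraticAlgebra_smul, norm_quadraticAlgebra_smul]
      ring
    have m_eq : m = 1 :=
      (hp.eq_one_or_self_of_dvd m (by exact_mod_cast m_dvd)).resolve_right hmp.ne
    subst m_eq
    exact ⟨u, v, by simpa using huv⟩
  · exact ih q hqm q_pos (hqm.trans hmp) (isSumTwoNorms_mul_of_norm_sub_smul hm' huv hq)

theorem exists_sq_sub_self_add_one_add_sq_eq_zero (p : ℕ) [Fact p.Prime] :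
    ∃ x y : ZMod p, x ^ 2 - x + 1 + y ^ 2 = 0 := by
  rcases (Fact.out : p.Prime).eq_two_or_odd with rfl | p_odd
  · exact ⟨0, 1, by ring_nf; rfl⟩
  · obtain ⟨x, y, hxy⟩ := FiniteField.exists_root_sum_quadratic (R := ZMod p)
      (f := .X ^ 2 - .X + 1) (g := .X ^ 2) (by compute_degree!) (by compute_degree!)
      (by rwa [ZMod.card])
    exact ⟨x, y, by simpa using hxy⟩

theorem isSumTwoNorms_prime {p : ℕ} (hp : p.Prime) : IsSumTwoNorms (-1 : ℤ) (-1) p := by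
  have := Fact.mk hp
  obtain ⟨x, y, hxy⟩ := exists_sq_sub_self_add_one_add_sq_eq_zero p
  obtain ⟨x, rfl⟩ := ZMod.intCast_surjective x
  obtain ⟨y, rfl⟩ := ZMod.intCast_surjective y
  let u : EisensteinInt := ⟨x, 1⟩
  let v : EisensteinInt := ⟨y, 0⟩
  have hp_dvd : (p : ℤ) ∣ u.norm + v.norm := by
    have norm_eq : u.norm + v.norm = x ^ 2 - x + 1 + y ^ 2 := by
      simp only [u, v, QuadraticAlgebra.norm_def]
      ring
    rw [norm_eq, ← ZMod.intCast_zmod_eq_zero_iff_dvd]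
    exact_mod_cast hxy
  obtain ⟨k, l, q, hqp, hq⟩ :=
    EisensteinInt.exists_norm_sub_smul_add_norm_sub_smul_eq hp.pos hp_dvd
  refine isSumTwoNorms_prime_of_mul hp (Nat.pos_of_ne_zero ?_) hqp ⟨_, _, hq⟩
  rintro rfl
  rw [Nat.cast_zero, mul_zero, EisensteinInt.norm_add_norm_eq_zero_iff, sub_eq_zero] at hq
  have one_eq : 1 = (p : ℤ) * k.im := congrArg QuadraticAlgebra.im hq.1
  exact (Nat.prime_iff_prime_int.1 hp).not_dvd_one ⟨_, one_eq⟩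

theorem isSumTwoNorms_natCast (n : ℕ) : IsSumTwoNorms (-1 : ℤ) (-1) n := by
  induction n using Nat.recOnMul with
  | zero => exact ⟨0, 0, by simp⟩
  | one => exact ⟨1, 0, by simp⟩
  | prime p hp => exact isSumTwoNorms_prime hp
  | mul m n hm hn => exact_mod_cast hm.mul hn

-- One of `u`, `ω * u`, `ω ^ 2 * u` lies in `ℤ[√-3]`, according to the parities of its coordinates.
theorem EisensteinInt.exists_norm_eq_sq_add_three_mul_sq (u : EisensteinInt) :
    ∃ x y : ℤ, u.norm = x ^ 2 + 3 * y ^ 2 := by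
  obtain ⟨i, j⟩ := u
  simp only [QuadraticAlgebra.norm_def]
  rcases Int.even_or_odd' i with ⟨k, rfl | rfl⟩ <;> rcases Int.even_or_odd' j with ⟨l, rfl | rfl⟩
  · exact ⟨2 * k - l, l, by ring⟩
  · exact ⟨2 * l + 1 - k, k, by ring⟩
  · exact ⟨2 * k + 1 - l, l, by ring⟩
  · exact ⟨k + l + 1, k - l, by ring⟩

theorem exists_sq_add_sq_add_three_mul_sq_add_three_mul_sq_eq (n : ℕ) :
    ∃ x y z w : ℤ, x ^ 2 + y ^ 2 + 3 * z ^ 2 + 3 * w ^ 2 = n := by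
  obtain ⟨u, v, huv⟩ := isSumTwoNorms_natCast n
  obtain ⟨x, z, hu⟩ := EisensteinInt.exists_norm_eq_sq_add_three_mul_sq u
  obtain ⟨y, w, hv⟩ := EisensteinInt.exists_norm_eq_sq_add_three_mul_sq v
  exact ⟨x, y, z, w, by linarith⟩

end Eisenstein

section IntegralElements

theorem exists_algebraMap_eq_of_squarefree_mul_sq {R F : Type*} [CommRing R] [IsDomain R]
    [UniqueFactorizationMonoid R] [Field F] [Algebra R F] [IsFractionRing R F] {d m : R}
    (hd : Squarefree d) {q : F} (h : algebraMap R F d * q ^ 2 = algebraMap R F m) :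
    ∃ k : R, algebraMap R F k = q := by
  obtain ⟨u, v, huv, rfl⟩ := IsFractionRing.exists_reduced_fraction R q
  have v_ne : algebraMap R F v ≠ 0 := IsFractionRing.to_map_ne_zero_of_mem_nonZeroDivisors v.2
  have cleared : d * u ^ 2 = m * (v : R) ^ 2 := by
    apply IsFractionRing.injective R F
    rw [IsFractionRing.mk'_eq_div] at h
    simp only [map_mul, map_pow]
    field_simp at h
    linear_combination h
  have v_sq_dvd : (v : R) * v ∣ d := by
    rw [← sq]
    exact huv.symm.pow.dvd_of_dvd_mul_right (Dvd.intro_left m cleared.symm)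
  obtain ⟨w, hw⟩ := (hd v v_sq_dvd).exists_right_inv
  refine ⟨u * w, ?_⟩
  rw [IsFractionRing.mk'_eq_div, eq_div_iff v_ne, ← map_mul]
  congr 1
  linear_combination u * hw

section

variable {R F : Type*} [CommRing R] [Field F] [Algebra R F] {a b : F}

theorem isIntegral_star_quadraticAlgebra {z : QuadraticAlgebra F a b} (hz : IsIntegral R z) :
    IsIntegral R (star z) := by
  refine hz.map_of_comp_eq (RingHom.id R) starRingAut.toRingHom (RingHom.ext fun r ↦ ?_)
  change algebraMap R (QuadraticAlgebra F a b) r = star (algebraMap R (QuadraticAlgebra F a b) r)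
  rw [IsScalarTower.algebraMap_apply R F (QuadraticAlgebra F a b),
    star_algebraMap_quadraticAlgebra]

theorem isIntegral_trace_quadraticAlgebra {z : QuadraticAlgebra F a b} (hz : IsIntegral R z) :
    IsIntegral R z.trace := by
  rw [← isIntegral_algebraMap_iff (QuadraticAlgebra.algebraMap_injective (a := a) (b := b)),
    QuadraticAlgebra.algebraMap_trace_eq_add_star]
  exact hz.add (isIntegral_star_quadraticAlgebra hz)

theorem isIntegral_norm_quadraticAlgebra {z : QuadraticAlgebra F a b} (hz : IsIntegral R z) :
    IsIntegral R z.norm := by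
  rw [← isIntegral_algebraMap_iff (QuadraticAlgebra.algebraMap_injective (a := a) (b := b)),
    QuadraticAlgebra.algebraMap_norm_eq_mul_star]
  exact hz.mul (isIntegral_star_quadraticAlgebra hz)

end

theorem exists_eq_algebraMap_of_isIntegral_quadraticAlgebra {R F : Type*} [CommRing R]
    [IsDomain R] [UniqueFactorizationMonoid R] [Field F] [Algebra R F] [IsFractionRing R F]
    {a b : R} (hd : Squarefree (b ^ 2 + 4 * a))
    {z : QuadraticAlgebra F (algebraMap R F a) (algebraMap R F b)} (hz : IsIntegral R z) :
    ∃ c d : R, z = ⟨algebraMap R F c, algebraMap R F d⟩ := by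
  obtain ⟨t, ht⟩ := IsIntegrallyClosed.isIntegral_iff.1 (isIntegral_trace_quadraticAlgebra hz)
  obtain ⟨n, hn⟩ := IsIntegrallyClosed.isIntegral_iff.1 (isIntegral_norm_quadraticAlgebra hz)
  rw [QuadraticAlgebra.trace_def] at ht
  rw [QuadraticAlgebra.norm_def] at hn
  obtain ⟨d, im_eq⟩ : ∃ d : R, algebraMap R F d = z.im := by
    refine exists_algebraMap_eq_of_squarefree_mul_sq (m := t ^ 2 - 4 * n) hd ?_
    simp only [map_sub, map_add, map_mul, map_pow, map_ofNat, ht, hn]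
    ring
  have re_integral : IsIntegral R z.re := by
    refine ⟨.X ^ 2 + .C (b * d) * .X - .C (a * d ^ 2 + n), by monicity!, ?_⟩
    simp only [Polynomial.eval₂_sub, Polynomial.eval₂_add, Polynomial.eval₂_mul,
      Polynomial.eval₂_pow, Polynomial.eval₂_X, Polynomial.eval₂_C, map_add, map_mul, map_pow,
      im_eq, hn]
    ring
  obtain ⟨c, re_eq⟩ := IsIntegrallyClosed.isIntegral_iff.1 re_integral
  exact ⟨c, d, QuadraticAlgebra.ext re_eq.symm im_eq.symm⟩

theorem algHom_quadraticAlgebra_injective {R F A : Type*} [CommRing R] [Field F] [Algebra R F]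
    [FaithfulSMul R F] [Ring A] [Nontrivial A] [Algebra F A] [Algebra R A] [IsScalarTower R F A]
    {a b : R} (f : QuadraticAlgebra R a b →ₐ[R] A)
    (hf : f QuadraticAlgebra.omega ∉ (algebraMap F A).range) : Function.Injective f := by
  rw [injective_iff_map_eq_zero]
  intro z hz
  have apply_eq : algebraMap F A (algebraMap R F z.re) +
      algebraMap R F z.im • f QuadraticAlgebra.omega = 0 := by
    rw [← IsScalarTower.algebraMap_apply, algebraMap_smul, ← f.commutes, ← map_smul, ← map_add,
      ← QuadraticAlgebra.mk_eq_add_smul_omega]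
    exact hz
  have im_eq : algebraMap R F z.im = 0 := by
    by_contra im_ne
    refine hf ⟨-((algebraMap R F z.im)⁻¹ * algebraMap R F z.re), ?_⟩
    rw [add_comm, add_eq_zero_iff_eq_neg, ← map_neg] at apply_eq
    rw [← inv_smul_smul₀ im_ne (f _), apply_eq, Algebra.smul_def, ← map_mul, mul_neg]
  have re_eq : algebraMap R F z.re = 0 := by
    rw [im_eq, zero_smul, add_zero] at apply_eq
    exact (algebraMap F A).injective (apply_eq.trans (map_zero _).symm)
  rw [FaithfulSMul.algebraMap_eq_zero_iff] at re_eq im_eq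
  exact QuadraticAlgebra.ext re_eq im_eq

theorem algHom_quadraticAlgebra_bijective {F A : Type*} [Field F] [Ring A] [Nontrivial A]
    [Algebra F A] (hA : Module.finrank F A = 2) {a b : F} (f : QuadraticAlgebra F a b →ₐ[F] A)
    (hf : f QuadraticAlgebra.omega ∉ (algebraMap F A).range) : Function.Bijective f := by
  have : FiniteDimensional F A := Module.finite_of_finrank_pos (hA ▸ two_pos)
  have f_inj := algHom_quadraticAlgebra_injective (F := F) f hf
  refine ⟨f_inj, (LinearMap.injective_iff_surjective_of_finrank_eq_finrank (f := f.toLinearMap)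
    ?_).1 f_inj⟩
  rw [QuadraticAlgebra.finrank_eq_two, hA]

section

variable {R F K : Type*} [CommRing R] [Field F] [Algebra R F] [IsFractionRing R F] [Field K]
  [Algebra F K] [Algebra R K] [IsScalarTower R F K] {a b : R} {θ : K}

theorem notMem_range_algebraMap_of_squarefree [IsIntegrallyClosed R]
    (hd : Squarefree (b ^ 2 + 4 * a)) (hd' : ¬ IsUnit (b ^ 2 + 4 * a))
    (hθ : θ * θ = algebraMap R K a + algebraMap R K b * θ) :
    θ ∉ (algebraMap F K).range := by
  rintro ⟨x, rfl⟩
  simp only [IsScalarTower.algebraMap_apply R F K, ← map_mul, ← map_add] at hθ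
  replace hθ := (algebraMap F K).injective hθ
  have x_integral : IsIntegral R x := by
    refine ⟨.X ^ 2 - .C b * .X - .C a, by monicity!, ?_⟩
    simp only [Polynomial.eval₂_sub, Polynomial.eval₂_mul, Polynomial.eval₂_pow,
      Polynomial.eval₂_X, Polynomial.eval₂_C]
    linear_combination hθ
  obtain ⟨k, rfl⟩ := IsIntegrallyClosed.isIntegral_iff.1 x_integral
  rw [← map_mul, ← map_mul, ← map_add] at hθ
  replace hθ := IsFractionRing.injective R F hθ
  have disc_eq : b ^ 2 + 4 * a = (2 * k - b) * (2 * k - b) := by linear_combination -4 * hθ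
  have root_unit : IsUnit (2 * k - b) := hd _ (dvd_of_eq disc_eq.symm)
  exact hd' (disc_eq ▸ root_unit.mul root_unit)

variable (F) in
theorem exists_eq_algebraMap_add_algebraMap_mul_of_isIntegral [IsDomain R]
    [UniqueFactorizationMonoid R] (hK : Module.finrank F K = 2) (hd : Squarefree (b ^ 2 + 4 * a))
    (hd' : ¬ IsUnit (b ^ 2 + 4 * a))
    (hθ : θ * θ = algebraMap R K a + algebraMap R K b * θ)
    {x : K} (hx : IsIntegral R x) :
    ∃ c d : R, x = algebraMap R K c + algebraMap R K d * θ := by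
  let f : QuadraticAlgebra F (algebraMap R F a) (algebraMap R F b) →ₐ[F] K :=
    QuadraticAlgebra.lift ⟨θ, by
      simpa only [Algebra.smul_def, mul_one, ← IsScalarTower.algebraMap_apply R F K] using hθ⟩
  have f_omega : f QuadraticAlgebra.omega = θ := by simp [f]
  have f_bij : Function.Bijective f := algHom_quadraticAlgebra_bijective hK f <| by
    rw [f_omega]
    exact notMem_range_algebraMap_of_squarefree hd hd' hθ
  obtain ⟨z, rfl⟩ := f_bij.2 x
  have hz : IsIntegral R z :=
    (isIntegral_algHom_iff (f.restrictScalars R) f_bij.1).1 hx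
  obtain ⟨c, d, rfl⟩ := exists_eq_algebraMap_of_isIntegral_quadraticAlgebra hd hz
  refine ⟨c, d, ?_⟩
  rw [QuadraticAlgebra.mk_eq_add_smul_omega, map_add, map_smul, f_omega, f.commutes,
    Algebra.smul_def, ← IsScalarTower.algebraMap_apply, ← IsScalarTower.algebraMap_apply]

end

open QuadraticAlgebra in
theorem ringOfIntegers_lift_quadraticAlgebra_bijective {K : Type*} [Field K] [CharZero K]
    (hK : Module.finrank ℚ K = 2) {a b : ℤ} (hd : Squarefree (b ^ 2 + 4 * a))
    (hd' : ¬ IsUnit (b ^ 2 + 4 * a)) {θ : 𝓞 K} (hθ : θ * θ = a • 1 + b • θ) :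
    Function.Bijective (lift ⟨θ, hθ⟩ : QuadraticAlgebra ℤ a b →ₐ[ℤ] 𝓞 K) := by
  have hθK : (θ : K) * θ = algebraMap ℤ K a + algebraMap ℤ K b * θ := by
    simpa [-mul_eq_mul_left_iff] using congrArg (algebraMap (𝓞 K) K) hθ
  have lift_eq (c d : ℤ) : ((lift ⟨θ, hθ⟩ (⟨c, d⟩ : QuadraticAlgebra ℤ a b) : 𝓞 K) : K) =
      algebraMap ℤ K c + algebraMap ℤ K d * θ := by
    simp [mk_eq_add_smul_omega]
  constructor
  · refine .of_comp (f := algebraMap (𝓞 K) K) ?_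
    refine algHom_quadraticAlgebra_injective (F := ℚ)
      ((IsScalarTower.toAlgHom ℤ (𝓞 K) K).comp (lift ⟨θ, hθ⟩)) ?_
    simpa [-RingHom.mem_range] using notMem_range_algebraMap_of_squarefree (F := ℚ) hd hd' hθK
  · intro x
    obtain ⟨c, d, hx⟩ := exists_eq_algebraMap_add_algebraMap_mul_of_isIntegral ℚ hK hd hd' hθK
      x.isIntegral_coe
    exact ⟨⟨c, d⟩, RingOfIntegers.ext ((lift_eq c d).trans hx.symm)⟩

end IntegralElements

section GoldenInt

/-- The ring `ℤ[φ]` of golden integers, with `φ ^ 2 = 1 + φ`: the ring of integers of `ℚ(√5)`. -/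
abbrev GoldenInt : Type := QuadraticAlgebra ℤ 1 1

theorem GoldenInt.re_sq (x : GoldenInt) : (x ^ 2).re = x.re ^ 2 + x.im ^ 2 := by
  simp [sq]

theorem GoldenInt.im_sq (x : GoldenInt) : (x ^ 2).im = 2 * x.re * x.im + x.im ^ 2 := by
  simp only [sq, QuadraticAlgebra.im_mul]
  ring

theorem GoldenInt.re_sq_nonneg (x : GoldenInt) : 0 ≤ (x ^ 2).re := by
  rw [re_sq]
  positivity

theorem GoldenInt.re_sq_eq_zero_iff {x : GoldenInt} : (x ^ 2).re = 0 ↔ x = 0 := by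
  rw [re_sq, add_eq_zero_iff_of_nonneg (sq_nonneg _) (sq_nonneg _), sq_eq_zero_iff,
    sq_eq_zero_iff, QuadraticAlgebra.ext_iff]
  rfl

theorem GoldenInt.sq_add_sq_ne (x y : GoldenInt) : x ^ 2 + y ^ 2 ≠ ⟨3, 1⟩ := by
  intro h
  have no_solution : ∀ i j k l : ZMod 4, i ^ 2 + j ^ 2 + (k ^ 2 + l ^ 2) = 3 →
      2 * i * j + j ^ 2 + (2 * k * l + l ^ 2) ≠ 1 := by decide
  have hre := congrArg QuadraticAlgebra.re h
  have him := congrArg QuadraticAlgebra.im h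
  rw [QuadraticAlgebra.re_add, re_sq, re_sq] at hre
  rw [QuadraticAlgebra.im_add, im_sq, im_sq] at him
  exact no_solution x.re x.im y.re y.im (by exact_mod_cast congrArg (Int.cast : ℤ → ZMod 4) hre)
    (by exact_mod_cast congrArg (Int.cast : ℤ → ZMod 4) him)

theorem GoldenInt.sq_add_sq_add_three_mul_sq_add_three_mul_sq_ne (x y z w : GoldenInt) :
    x ^ 2 + y ^ 2 + 3 * z ^ 2 + 3 * w ^ 2 ≠ ⟨3, 1⟩ := by
  intro h
  have hre : (x ^ 2).re + (y ^ 2).re + 3 * ((z ^ 2).re + (w ^ 2).re) = 3 := by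
    have := congrArg QuadraticAlgebra.re h
    simp only [QuadraticAlgebra.re_add, QuadraticAlgebra.re_mul, QuadraticAlgebra.re_ofNat,
      QuadraticAlgebra.im_ofNat] at this
    linarith
  have him : (x ^ 2).im + (y ^ 2).im + 3 * ((z ^ 2).im + (w ^ 2).im) = 1 := by
    have := congrArg QuadraticAlgebra.im h
    simp only [QuadraticAlgebra.im_add, QuadraticAlgebra.im_mul, QuadraticAlgebra.re_ofNat,
      QuadraticAlgebra.im_ofNat] at this
    linarith
  have hx := re_sq_nonneg x
  have hy := re_sq_nonneg y
  have hz := re_sq_nonneg z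
  have hw := re_sq_nonneg w
  obtain ⟨hz, hw⟩ | ⟨hx, hy⟩ : (z ^ 2).re = 0 ∧ (w ^ 2).re = 0 ∨
      (x ^ 2).re = 0 ∧ (y ^ 2).re = 0 := by
    omega
  · rw [re_sq_eq_zero_iff] at hz hw
    refine sq_add_sq_ne x y ?_
    simpa [hz, hw] using h
  · rw [re_sq_eq_zero_iff] at hx hy
    rw [hx, hy, im_sq 0, QuadraticAlgebra.im_zero] at him
    omega

end GoldenInt

/-- in $K = ℚ(\sqrt5)$, the form $x²+y²+3z²+3w²$ represents every
positive rational integer (over $ℤ$) but does not represent $(7+\sqrt5)/2$ over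
$\mathcal O_K$. -/
theorem stmt16 {K : Type} [Field K] [NumberField K]
    (hdeg : Module.finrank ℚ K = 2)
    (r α : 𝓞 K) (hr : r ^ 2 = 5) (hα : 2 * α = 7 + r) :
    (∀ n : ℕ, 0 < n → ∃ x y z w : ℤ, x ^ 2 + y ^ 2 + 3 * z ^ 2 + 3 * w ^ 2 = (n : ℤ)) ∧
    ¬ ∃ x y z w : 𝓞 K, x ^ 2 + y ^ 2 + 3 * z ^ 2 + 3 * w ^ 2 = α := by
  refine ⟨fun n _ ↦ exists_sq_add_sq_add_three_mul_sq_add_three_mul_sq_eq n, ?_⟩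
  have golden_eq : (α - 3) * (α - 3) = (1 : ℤ) • 1 + (1 : ℤ) • (α - 3) := by
    apply mul_left_cancel₀ (by norm_num : (4 : 𝓞 K) ≠ 0)
    linear_combination (2 * α - 7 + r) * hα + hr
  have disc_prime : Prime ((1 : ℤ) ^ 2 + 4 * 1) := by
    norm_num
  set f : GoldenInt →ₐ[ℤ] 𝓞 K := QuadraticAlgebra.lift ⟨α - 3, golden_eq⟩ with hf
  have f_bij : Function.Bijective f := ringOfIntegers_lift_quadraticAlgebra_bijective hdeg
    disc_prime.squarefree disc_prime.not_isUnit golden_eq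
  have f_eq : f ⟨3, 1⟩ = α := by
    rw [QuadraticAlgebra.mk_eq_add_smul_omega, map_add, map_smul, f.commutes]
    simp [hf]
  rintro ⟨x, y, z, w, h⟩
  obtain ⟨x, rfl⟩ := f_bij.2 x
  obtain ⟨y, rfl⟩ := f_bij.2 y
  obtain ⟨z, rfl⟩ := f_bij.2 z
  obtain ⟨w, rfl⟩ := f_bij.2 w
  refine GoldenInt.sq_add_sq_add_three_mul_sq_add_three_mul_sq_ne x y z w (f_bij.1 ?_)
  rw [f_eq, ← h]
  simp [map_ofNat f 3]
end
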